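/- arXiv:2412.13616 — 2 statements merged into one kernel-verified Lean document; each statement's English description precedes it below -/
import Mathlib

section
/- Let 𝔽_q be a finite field, l, m positive integers, and suppose (x^l − 1)(y^m − 1) = g(x,y)·h(x,y) in 𝔽_q[x,y] with g, h nonzero. Let C be the ideal of 𝔎 = 𝔽_q[x,y]/⟨x^l−1, y^m−1⟩ generated by the image of g, and let C* be the ideal of 𝔎 generated by the image of the reciprocal polynomial h*. Then C* ⊆ C^⊥, where C^⊥ is the Euclidean dual of C under the identification of 𝔎 with 𝔽_q^{lm} via coefficients of the unique representative with x-degree < l and y-degree < m. -/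
/-!
Let `A = F[ℤ/l × ℤ/m]` be the group algebra. Sending `x, y` to the two standard generators gives
`φ : F[x,y] → A`, and sending them to the inverses of these generators gives `ψ : F[x,y] → A`; both
kill the ideal `⟨x^l - 1, y^m - 1⟩`. For reduced representatives `p, q`, the Euclidean inner product
of the coefficient vectors is the coefficient of the identity in `φ p * ψ q`
(`coeff_zero_mul_wrap`). Up to a unit (a group element), `ψ (h*)` equals `φ h` (`wrap_recip`), so
for `c = a g` and `d = b h*` the product `φ c * ψ d` is a multiple of
`φ (g h) = φ ((x^l - 1)(y^m - 1)) = 0`.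
-/

open MvPolynomial

/-- The reciprocal polynomial of a bivariate polynomial `f` of `x`-degree `l₁` and
`y`-degree `l₂`: if `f = Σ f_{i,j} x^i y^j` then `f* = Σ f_{i,j} x^{l₁-i} y^{l₂-j}`. -/
noncomputable def recip {F : Type*} [Field F] (f : MvPolynomial (Fin 2) F) :
    MvPolynomial (Fin 2) F :=
  ∑ d ∈ f.support,
    MvPolynomial.monomial
      (Finsupp.single (0 : Fin 2) (f.degreeOf 0 - d 0) +
        Finsupp.single (1 : Fin 2) (f.degreeOf 1 - d 1))
      (MvPolynomial.coeff d f)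

/-- The `F`-algebra homomorphism from `F[x,y]` to the group algebra `F[G]` with `x ↦ u`, `y ↦ v`. -/
noncomputable def wrap {F G : Type*} [Field F] [AddCommGroup G] (u v : G) :
    MvPolynomial (Fin 2) F →ₐ[F] AddMonoidAlgebra F G :=
  aeval ![AddMonoidAlgebra.single u 1, AddMonoidAlgebra.single v 1]

lemma wrap_monomial {F G : Type*} [Field F] [AddCommGroup G] (u v : G) (d : Fin 2 →₀ ℕ) (r : F) :
    wrap u v (monomial d r) = AddMonoidAlgebra.single (d 0 • u + d 1 • v) r := by
  rw [wrap, aeval_monomial, Finsupp.prod_fintype _ _ (by simp)]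
  simp [Fin.prod_univ_two, AddMonoidAlgebra.single_pow, AddMonoidAlgebra.single_mul_single]

lemma wrap_X_pow_sub_one {F G : Type*} [Field F] [AddCommGroup G] (u v : G) (l m : ℕ)
    (hu : l • u = 0) (hv : m • v = 0) :
    wrap u v (X 0 ^ l - 1 : MvPolynomial (Fin 2) F) = 0 ∧
      wrap u v (X 1 ^ m - 1 : MvPolynomial (Fin 2) F) = 0 := by
  rw [map_sub, map_sub, map_one, map_pow, map_pow, AddMonoidAlgebra.one_def]
  simp [wrap, AddMonoidAlgebra.single_pow, hu, hv]

lemma wrap_eq_zero_of_mem {F G : Type*} [Field F] [AddCommGroup G] (u v : G) (l m : ℕ)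
    (hu : l • u = 0) (hv : m • v = 0) {p : MvPolynomial (Fin 2) F}
    (hp : p ∈ Ideal.span {X 0 ^ l - 1, X 1 ^ m - 1}) : wrap u v p = 0 := by
  obtain ⟨a, b, rfl⟩ := Ideal.mem_span_pair.1 hp
  obtain ⟨h0, h1⟩ := wrap_X_pow_sub_one (F := F) u v l m hu hv
  rw [map_add, map_mul, map_mul, h0, h1, mul_zero, mul_zero, add_zero]

/-- Inverting both variables turns the reciprocal polynomial back into `h`, up to a group element. -/
lemma wrap_recip {F G : Type*} [Field F] [AddCommGroup G] (u v : G)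
    (h : MvPolynomial (Fin 2) F) :
    wrap (-u) (-v) (recip h) =
      AddMonoidAlgebra.single (-(h.degreeOf 0 • u + h.degreeOf 1 • v)) 1 * wrap u v h := by
  have hsum := congrArg (wrap u v) h.as_sum
  rw [map_sum] at hsum
  rw [hsum, recip, map_sum, Finset.mul_sum]
  refine Finset.sum_congr rfl fun d hd => ?_
  have h0 := monomial_le_degreeOf 0 hd
  have h1 := monomial_le_degreeOf 1 hd
  obtain ⟨a, ha⟩ := Nat.exists_eq_add_of_le h0
  obtain ⟨b, hb⟩ := Nat.exists_eq_add_of_le h1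
  rw [wrap_monomial, wrap_monomial, AddMonoidAlgebra.single_mul_single, one_mul, ha, hb]
  congr 1
  simp [add_smul]
  abel

lemma eq_sum_of_degreeOf_lt {F : Type*} [Field F] {l m : ℕ}
    {p : MvPolynomial (Fin 2) F} (h0 : p.degreeOf 0 < l) (h1 : p.degreeOf 1 < m) :
    p = ∑ i ∈ Finset.range l, ∑ j ∈ Finset.range m,
      monomial (Finsupp.single 0 i + Finsupp.single 1 j)
        (coeff (Finsupp.single 0 i + Finsupp.single 1 j) p) := by
  have key : ∀ d : Fin 2 →₀ ℕ, Finsupp.single 0 (d 0) + Finsupp.single 1 (d 1) = d := by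
    intro d
    ext k
    fin_cases k <;> simp
  rw [← Finset.sum_product']
  conv_lhs => rw [p.as_sum]
  refine Finset.sum_of_injOn (fun d => (d 0, d 1)) ?_ ?_ ?_ ?_
  · intro d _ e _ hde
    rw [← key d, ← key e]
    simp only [Prod.mk.injEq] at hde
    rw [hde.1, hde.2]
  · intro d hd
    simpa using ⟨(monomial_le_degreeOf 0 hd).trans_lt h0, (monomial_le_degreeOf 1 hd).trans_lt h1⟩
  · rintro ⟨i, j⟩ _ hij
    rw [monomial_eq_zero]
    by_contra hne
    exact hij ⟨_, mem_support_iff.2 hne, by simp⟩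
  · intro d _
    simp only [key]

lemma single_sub_eq_zero_iff {l m i i' j j' : ℕ} (hi : i < l) (hi' : i' < l) (hj : j < m)
    (hj' : j' < m) :
    (i • ((1, 0) : ZMod l × ZMod m) + j • ((0, 1) : ZMod l × ZMod m)) +
      (i' • (-(1, 0) : ZMod l × ZMod m) + j' • (-(0, 1) : ZMod l × ZMod m)) = 0 ↔
      i = i' ∧ j = j' := by
  simp only [Prod.smul_mk, Prod.neg_mk, Prod.mk_add_mk, nsmul_eq_mul, mul_one, mul_zero, neg_zero,
    add_zero, zero_add, mul_neg, Prod.mk_eq_zero]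
  rw [← sub_eq_add_neg, ← sub_eq_add_neg, sub_eq_zero, sub_eq_zero, ZMod.natCast_eq_natCast_iff', ZMod.natCast_eq_natCast_iff', Nat.mod_eq_of_lt hi,
    Nat.mod_eq_of_lt hi', Nat.mod_eq_of_lt hj, Nat.mod_eq_of_lt hj']

/-- The Euclidean inner product of reduced representatives, read off in the group algebra. -/
lemma coeff_zero_mul_wrap {F : Type*} [Field F] {l m : ℕ} {p q : MvPolynomial (Fin 2) F}
    (hp0 : p.degreeOf 0 < l) (hp1 : p.degreeOf 1 < m)
    (hq0 : q.degreeOf 0 < l) (hq1 : q.degreeOf 1 < m) :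
    (wrap ((1, 0) : ZMod l × ZMod m) (0, 1) p * wrap (-(1, 0)) (-(0, 1)) q).coeff 0 =
      ∑ i ∈ Finset.range l, ∑ j ∈ Finset.range m,
        coeff (Finsupp.single 0 i + Finsupp.single 1 j) p *
          coeff (Finsupp.single 0 i + Finsupp.single 1 j) q := by
  conv_lhs => rw [eq_sum_of_degreeOf_lt hp0 hp1, eq_sum_of_degreeOf_lt hq0 hq1]
  simp only [map_sum, wrap_monomial, Finset.sum_mul, AddMonoidAlgebra.coeff_sum,
    Finsupp.finsetSum_apply]
  refine Finset.sum_congr rfl fun i hi => Finset.sum_congr rfl fun j hj => ?_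
  simp only [Finset.mul_sum, AddMonoidAlgebra.coeff_sum, Finsupp.finsetSum_apply,
    AddMonoidAlgebra.single_mul_single, AddMonoidAlgebra.coeff_single]
  -- only the term with the same exponents `(i, j)` contributes to the identity coefficient
  rw [Finset.sum_eq_single_of_mem i hi, Finset.sum_eq_single_of_mem j hj]
  · rw [Finsupp.single_apply, if_pos]
    simp
  · intro j' hj' hne
    rw [Finsupp.single_apply, if_neg]
    simp only [Finset.mem_range] at hi hj hj'
    simpa using (single_sub_eq_zero_iff hi hi hj hj').not.2 fun h => hne h.2.symm
  · intro i' hi' hne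
    refine Finset.sum_eq_zero fun j' hj' => ?_
    rw [Finsupp.single_apply, if_neg]
    simp only [Finset.mem_range] at hi hj hi' hj'
    simpa using (single_sub_eq_zero_iff hi hi' hj hj').not.2 fun h => hne h.1.symm

/-- Suppose `(x^l − 1)(y^m − 1) = g·h` with `g, h` nonzero.  In the
quotient ring `𝔎 = F[x,y]/⟨x^l−1, y^m−1⟩`, let `C` be the ideal generated by (the
image of) `g` and `C*` the ideal generated by (the image of) `h*`.  Identifying each
class of `𝔎` with the coefficient vector of its unique representative of `x`-degree
`< l` and `y`-degree `< m` (the function `rep` below), we have `C* ⊆ C^⊥` for the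
Euclidean inner product: every element of `C*` is orthogonal to every element of `C`. -/
theorem stmt_5 (F : Type*) [Field F] [Fintype F] (l m : ℕ) (hl : 0 < l) (hm : 0 < m)
    (g h : MvPolynomial (Fin 2) F) (hg : g ≠ 0) (hh : h ≠ 0)
    (heq : (X 0 ^ l - 1) * (X 1 ^ m - 1) = g * h)
    (K : Ideal (MvPolynomial (Fin 2) F))
    (hK : K = Ideal.span {X 0 ^ l - 1, X 1 ^ m - 1})
    (rep : (MvPolynomial (Fin 2) F ⧸ K) → MvPolynomial (Fin 2) F)
    (hrep : ∀ c, Ideal.Quotient.mk K (rep c) = c)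
    (hrepdeg : ∀ c, (rep c).degreeOf 0 < l ∧ (rep c).degreeOf 1 < m) :
    ∀ d ∈ Ideal.span {Ideal.Quotient.mk K (recip h)},
      ∀ c ∈ Ideal.span {Ideal.Quotient.mk K g},
        ∑ i ∈ Finset.range l, ∑ j ∈ Finset.range m,
          MvPolynomial.coeff (Finsupp.single 0 i + Finsupp.single 1 j) (rep c) *
            MvPolynomial.coeff (Finsupp.single 0 i + Finsupp.single 1 j) (rep d) = 0 := by
  intro d hd c hc
  obtain ⟨b, rfl⟩ := Ideal.mem_span_singleton'.1 hd
  obtain ⟨a, rfl⟩ := Ideal.mem_span_singleton'.1 hc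
  obtain ⟨b, rfl⟩ := Ideal.Quotient.mk_surjective b
  obtain ⟨a, rfl⟩ := Ideal.Quotient.mk_surjective a
  rw [← map_mul, ← map_mul, ← coeff_zero_mul_wrap (hrepdeg _).1 (hrepdeg _).2
    (hrepdeg _).1 (hrepdeg _).2]
  have hmem : ∀ p, rep (Ideal.Quotient.mk K p) - p ∈ Ideal.span {X 0 ^ l - 1, X 1 ^ m - 1} := by
    intro p
    rw [← hK]
    exact Ideal.Quotient.eq.1 (hrep _)
  have hu : l • ((1, 0) : ZMod l × ZMod m) = 0 := by simp
  have hv : m • ((0, 1) : ZMod l × ZMod m) = 0 := by simp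
  have hφ := wrap_eq_zero_of_mem _ _ l m hu hv (hmem (a * g))
  have hψ := wrap_eq_zero_of_mem (-(1, 0) : ZMod l × ZMod m) (-(0, 1)) l m
    (by rw [smul_neg, hu, neg_zero]) (by rw [smul_neg, hv, neg_zero]) (hmem (b * recip h))
  rw [map_sub, sub_eq_zero] at hφ hψ
  rw [hφ, hψ, map_mul, map_mul, wrap_recip]
  have hgh : wrap ((1, 0) : ZMod l × ZMod m) (0, 1) g * wrap (1, 0) (0, 1) h = 0 := by
    rw [← map_mul, ← heq, map_mul, (wrap_X_pow_sub_one _ _ l m hu hv).1, zero_mul]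
  rw [show ∀ A B C D E : AddMonoidAlgebra F (ZMod l × ZMod m),
    A * B * (C * (D * E)) = A * C * D * (B * E) from fun _ _ _ _ _ => by ring, hgh, mul_zero]
  simp
end

section
/- Let 𝔽_q be a finite field, l, m positive integers, and suppose (x^l − 1)(y^m − 1) = g(x,y)·h(x,y) in 𝔽_q[x,y], where g has x-degree a and y-degree b with 0 < a < l and 0 < b < m. Let C be the ideal of 𝔎 = 𝔽_q[x,y]/⟨x^l−1, y^m−1⟩ generated by the image of g, and C* the ideal of 𝔎 generated by the image of the reciprocal polynomial h*. Then C* ⊆ C if and only if g(x,y)·g*(x,y) divides (x^l − 1)(y^m − 1) in 𝔽_q[x,y]. -/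
/-!
Write `A = x^l - 1` and `B = y^m - 1`, so that `A * B = g * h`. Reciprocation is multiplicative
(`recip_mul`) and fixes `A * B` (`recip_X_pow_sub_one_mul`), hence `A * B = g* h*`, and after
cancelling `g*` the divisibility `g g* ∣ A * B` becomes `g ∣ h*`. It remains to show that
`h* ∈ (g, A, B)` forces `g ∣ h*`.

By unique factorization `g = p * q` with `p ∣ A` and `q ∣ B`; comparing degrees, `p` is free of `y`
and `q` is free of `x`, so `p` and `q` are relatively prime (`isRelPrime_of_degreeOf`). Since `p`
divides `g` and `A`, `h*` is a multiple of `B` modulo `p`. But `B` is monic in `y` of degree `m`,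
while `h*` has `y`-degree at most `m - deg_y g < m`, so `h*` vanishes modulo `p`
(`dvd_of_degreeOf_lt`). Symmetrically `q ∣ h*`, and therefore `p * q ∣ h*`.
-/

open MvPolynomial

section

variable {F : Type*} [Field F]

lemma degreeOf_X_pow_sub_one (i j : Fin 2) {n : ℕ} (hn : 0 < n) :
    degreeOf i (X j ^ n - 1 : MvPolynomial (Fin 2) F) = if i = j then n else 0 := by
  classical
  apply le_antisymm
  · refine (degreeOf_sub_le _ _ _).trans ?_
    rw [degreeOf_one, degreeOf_pow_eq _ _ _ (X_ne_zero j), degreeOf_X]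
    split_ifs <;> simp
  · split_ifs with h
    · subst h
      have hmem : Finsupp.single i n ∈ (X i ^ n - 1 : MvPolynomial (Fin 2) F).support := by
        rw [mem_support_iff, coeff_sub, coeff_X_pow, coeff_one, if_pos rfl, if_neg]
        · simp
        · exact fun h0 => hn.ne (Finsupp.single_eq_zero.mp h0.symm).symm
      simpa using monomial_le_degreeOf i hmem
    · exact Nat.zero_le _

lemma X_pow_sub_one_ne_zero (j : Fin 2) {n : ℕ} (hn : 0 < n) :
    (X j ^ n - 1 : MvPolynomial (Fin 2) F) ≠ 0 := by
  intro h
  have := degreeOf_X_pow_sub_one (F := F) j j hn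
  simp [h] at this
  omega

lemma degreeOf_recip_le (i : Fin 2) (f : MvPolynomial (Fin 2) F) :
    degreeOf i (recip f) ≤ degreeOf i f := by
  classical
  refine (degreeOf_sum_le _ _ _).trans (Finset.sup_le fun d hd => ?_)
  rw [degreeOf_monomial_eq _ _ (mem_support_iff.mp hd)]
  fin_cases i <;> simp

/-- The coordinate `X i` as an element of the field of rational functions `F(x, y)`. -/
noncomputable def fracX (F : Type*) [Field F] (i : Fin 2) :
    FractionRing (MvPolynomial (Fin 2) F) :=
  algebraMap (MvPolynomial (Fin 2) F) (FractionRing (MvPolynomial (Fin 2) F)) (X i)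

lemma fracX_ne_zero (i : Fin 2) : fracX F i ≠ 0 := by
  simp [fracX]

/-- In `F(x, y)`, `f* = x^{l₁} y^{l₂} f(x⁻¹, y⁻¹)`. -/
lemma algebraMap_recip (f : MvPolynomial (Fin 2) F) :
    algebraMap (MvPolynomial (Fin 2) F) (FractionRing (MvPolynomial (Fin 2) F)) (recip f) =
      fracX F 0 ^ degreeOf 0 f * fracX F 1 ^ degreeOf 1 f *
        eval₂ (algebraMap F (FractionRing (MvPolynomial (Fin 2) F)))
          (fun i => (fracX F i)⁻¹) f := by
  rw [eval₂_eq', Finset.mul_sum, recip, map_sum]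
  refine Finset.sum_congr rfl fun d hd => ?_
  have h0 := monomial_le_degreeOf 0 hd
  have h1 := monomial_le_degreeOf 1 hd
  have hmon : (monomial (Finsupp.single (0 : Fin 2) (f.degreeOf 0 - d 0) +
      Finsupp.single (1 : Fin 2) (f.degreeOf 1 - d 1)) (coeff d f)) =
      C (coeff d f) * X 0 ^ (f.degreeOf 0 - d 0) * X 1 ^ (f.degreeOf 1 - d 1) := by
    rw [X_pow_eq_monomial, X_pow_eq_monomial, C_mul_monomial, monomial_mul]
    simp
  rw [hmon, map_mul, map_mul, map_pow, map_pow, Fin.prod_univ_two, inv_pow, inv_pow,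
    ← algebraMap_eq, ← IsScalarTower.algebraMap_apply]
  change _ * fracX F 0 ^ _ * fracX F 1 ^ _ = _
  rw [pow_sub₀ _ (fracX_ne_zero 0) h0, pow_sub₀ _ (fracX_ne_zero 1) h1]
  ring

lemma recip_mul {f g : MvPolynomial (Fin 2) F} (hf : f ≠ 0) (hg : g ≠ 0) :
    recip (f * g) = recip f * recip g := by
  apply IsFractionRing.injective (MvPolynomial (Fin 2) F) (FractionRing (MvPolynomial (Fin 2) F))
  rw [map_mul, algebraMap_recip, algebraMap_recip, algebraMap_recip, eval₂_mul,
    degreeOf_mul_eq hf hg, degreeOf_mul_eq hf hg, pow_add, pow_add]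
  ring

lemma recip_X_pow_sub_one_mul {l m : ℕ} (hl : 0 < l) (hm : 0 < m) :
    recip ((X 0 ^ l - 1) * (X 1 ^ m - 1) : MvPolynomial (Fin 2) F) =
      (X 0 ^ l - 1) * (X 1 ^ m - 1) := by
  apply IsFractionRing.injective (MvPolynomial (Fin 2) F) (FractionRing (MvPolynomial (Fin 2) F))
  rw [algebraMap_recip, degreeOf_mul_eq (X_pow_sub_one_ne_zero _ hl) (X_pow_sub_one_ne_zero _ hm),
    degreeOf_mul_eq (X_pow_sub_one_ne_zero _ hl) (X_pow_sub_one_ne_zero _ hm),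
    degreeOf_X_pow_sub_one _ _ hl, degreeOf_X_pow_sub_one _ _ hm, degreeOf_X_pow_sub_one _ _ hl,
    degreeOf_X_pow_sub_one _ _ hm]
  have hx := fracX_ne_zero (F := F) 0
  have hy := fracX_ne_zero (F := F) 1
  simp only [map_mul, map_sub, map_pow, map_one, eval₂_mul, eval₂_sub, eval₂_pow, eval₂_X,
    eval₂_one, ↓reduceIte, zero_ne_one, one_ne_zero, add_zero, zero_add]
  change _ = (fracX F 0 ^ l - 1) * (fracX F 1 ^ m - 1)
  have hxl : fracX F 0 ^ l * (fracX F 0)⁻¹ ^ l = 1 := by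
    rw [← mul_pow, mul_inv_cancel₀ hx, one_pow]
  have hym : fracX F 1 ^ m * (fracX F 1)⁻¹ ^ m = 1 := by
    rw [← mul_pow, mul_inv_cancel₀ hy, one_pow]
  linear_combination (fracX F 1 ^ m * (fracX F 1)⁻¹ ^ m - fracX F 1 ^ m) * hxl +
    (1 - fracX F 0 ^ l) * hym

/-- Modulo `p`, the polynomial `f` is a multiple of the monic `B` of larger degree, so it is zero. -/
lemma C_dvd_of_natDegree_lt {R : Type*} [CommRing R] (p : R) (f s t B : Polynomial R)
    (hB : B.Monic) (hf : f.natDegree < B.natDegree) (h : f = s * Polynomial.C p + t * B) :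
    Polynomial.C p ∣ f := by
  let φ := Ideal.Quotient.mk (Ideal.span {p})
  have hp : φ p = 0 := Ideal.Quotient.eq_zero_iff_mem.mpr (Ideal.mem_span_singleton_self p)
  have h1 : f.map φ = t.map φ * B.map φ := by
    rw [h]; simp [hp]
  have h2 : f.map φ = 0 := by
    by_contra h0
    have : Nontrivial (R ⧸ Ideal.span {p}) := by
      by_contra hn
      rw [not_nontrivial_iff_subsingleton] at hn
      exact h0 (Subsingleton.elim _ _)
    refine (hB.map φ).not_dvd_of_natDegree_lt h0 ?_ ⟨t.map φ, by rw [h1, mul_comm]⟩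
    rw [hB.natDegree_map]
    exact Polynomial.natDegree_map_le.trans_lt hf
  rw [Polynomial.C_dvd_iff_dvd_coeff]
  intro i
  rw [← Ideal.mem_span_singleton, ← Ideal.Quotient.eq_zero_iff_mem]
  simpa using congrArg (Polynomial.coeff · i) h2

/-- The case `i = 0` of `dvd_of_degreeOf_lt`, obtained by viewing bivariate polynomials as
polynomials in `X 0`; `p` then becomes a constant. -/
lemma dvd_of_degreeOf_lt_zero {p f s t : MvPolynomial (Fin 2) F} {m : ℕ}
    (hp : degreeOf 0 p = 0) (hf : degreeOf 0 f < m)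
    (h : f = s * p + t * (X 0 ^ m - 1)) : p ∣ f := by
  let e := finSuccEquiv F 1
  have hm : m ≠ 0 := by omega
  have hpe : e p = Polynomial.C ((e p).coeff 0) :=
    Polynomial.eq_C_of_natDegree_eq_zero (by rw [natDegree_finSuccEquiv, hp])
  have hdvd : Polynomial.C ((e p).coeff 0) ∣ e f := by
    refine C_dvd_of_natDegree_lt _ (e f) (e s) (e t) (Polynomial.X ^ m - Polynomial.C 1)
      (Polynomial.monic_X_pow_sub_C 1 hm) ?_ ?_
    · rw [Polynomial.natDegree_X_pow_sub_C, natDegree_finSuccEquiv]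
      exact hf
    · rw [← hpe, h]
      simp [e, finSuccEquiv_X_zero]
  rw [← hpe] at hdvd
  exact (map_dvd_iff e).mp hdvd

/-- If `p` does not involve `X i`, then an element of `(p, X i ^ m - 1)` whose degree in `X i` is
less than `m` is a multiple of `p`. -/
lemma dvd_of_degreeOf_lt (i : Fin 2) {p f s t : MvPolynomial (Fin 2) F} {m : ℕ}
    (hp : degreeOf i p = 0) (hf : degreeOf i f < m)
    (h : f = s * p + t * (X i ^ m - 1)) : p ∣ f := by
  let σ : Fin 2 ≃ Fin 2 := Equiv.swap i 0
  have hσ : σ i = 0 := Equiv.swap_apply_left _ _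
  have hd (q : MvPolynomial (Fin 2) F) : degreeOf 0 (renameEquiv F σ q) = degreeOf i q := by
    rw [← hσ]
    exact degreeOf_rename_of_injective σ.injective i
  refine (map_dvd_iff (renameEquiv F σ)).mp
    (dvd_of_degreeOf_lt_zero (s := renameEquiv F σ s) (t := renameEquiv F σ t) (m := m)
      ((hd p).trans hp) ((hd f).trans_lt hf) ?_)
  rw [h]
  simp [hσ]

lemma degreeOf_eq_zero_of_dvd {i : Fin 2} {p A : MvPolynomial (Fin 2) F} (hA : A ≠ 0)
    (h : p ∣ A) (hi : degreeOf i A = 0) : degreeOf i p = 0 := by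
  obtain ⟨k, rfl⟩ := h
  rw [degreeOf_mul_eq (left_ne_zero_of_mul hA) (right_ne_zero_of_mul hA)] at hi
  omega

lemma isRelPrime_of_degreeOf {p q : MvPolynomial (Fin 2) F} (hp0 : p ≠ 0) (hq0 : q ≠ 0)
    (hp : degreeOf 1 p = 0) (hq : degreeOf 0 q = 0) : IsRelPrime p q := by
  intro d hdp hdq
  have h1 := degreeOf_eq_zero_of_dvd hp0 hdp hp
  have h0 := degreeOf_eq_zero_of_dvd hq0 hdq hq
  have hd : d = C (coeff 0 d) := by
    rw [← totalDegree_eq_zero_iff_eq_C, totalDegree_eq_zero_iff]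
    intro m hm i
    fin_cases i
    · exact Nat.le_zero.mp (h0 ▸ monomial_le_degreeOf 0 hm)
    · exact Nat.le_zero.mp (h1 ▸ monomial_le_degreeOf 1 hm)
  have : d ≠ 0 := fun h => hp0 (zero_dvd_iff.mp (h ▸ hdp))
  rw [hd] at this ⊢
  exact (isUnit_iff_ne_zero.mpr (by simpa using this)).map C

end

/-- Suppose `(x^l − 1)(y^m − 1) = g·h` in `F[x,y]`, where `g` has
`x`-degree `a` and `y`-degree `b` with `0 < a < l` and `0 < b < m`.  Let `C` be the
ideal of `𝔎 = F[x,y]/⟨x^l−1, y^m−1⟩` generated by the image of `g` and `C*` the ideal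
generated by the image of `h*`.  Then `C* ⊆ C` iff `g·g*` divides `(x^l − 1)(y^m − 1)`. -/
theorem stmt_6 (F : Type*) [Field F] [Fintype F] (l m : ℕ) (hl : 0 < l) (hm : 0 < m)
    (g h : MvPolynomial (Fin 2) F)
    (heq : (X 0 ^ l - 1) * (X 1 ^ m - 1) = g * h)
    (ha0 : 0 < g.degreeOf 0) (hal : g.degreeOf 0 < l)
    (hb0 : 0 < g.degreeOf 1) (hbm : g.degreeOf 1 < m)
    (K : Ideal (MvPolynomial (Fin 2) F))
    (hK : K = Ideal.span {X 0 ^ l - 1, X 1 ^ m - 1}) :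
    Ideal.span {Ideal.Quotient.mk K (recip h)} ≤ Ideal.span {Ideal.Quotient.mk K g} ↔
      g * recip g ∣ (X (0 : Fin 2) ^ l - 1) * (X 1 ^ m - 1) := by
  have hA := X_pow_sub_one_ne_zero (F := F) 0 hl
  have hB := X_pow_sub_one_ne_zero (F := F) 1 hm
  have hgh : g * h ≠ 0 := heq ▸ mul_ne_zero hA hB
  have hg := left_ne_zero_of_mul hgh
  have hh := right_ne_zero_of_mul hgh
  have key : g * recip g ∣ (X (0 : Fin 2) ^ l - 1) * (X 1 ^ m - 1) ↔ g ∣ recip h := by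
    have hrec : (X (0 : Fin 2) ^ l - 1) * (X 1 ^ m - 1) = recip g * recip h := by
      rw [← recip_mul hg hh, ← heq, recip_X_pow_sub_one_mul hl hm]
    have hrg : recip g ≠ 0 := left_ne_zero_of_mul (hrec ▸ mul_ne_zero hA hB)
    rw [hrec, mul_comm g]
    exact mul_dvd_mul_iff_left hrg
  rw [key, Ideal.span_singleton_le_span_singleton]
  refine ⟨fun hdvd => ?_, fun hdvd => map_dvd _ hdvd⟩
  have hdeg (i : Fin 2) : degreeOf i (X 0 ^ l - 1 : MvPolynomial (Fin 2) F) +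
      degreeOf i (X 1 ^ m - 1 : MvPolynomial (Fin 2) F) = degreeOf i g + degreeOf i h := by
    rw [← degreeOf_mul_eq hA hB, heq, degreeOf_mul_eq hg hh]
  have hd0 := hdeg 0
  have hd1 := hdeg 1
  rw [degreeOf_X_pow_sub_one _ _ hl, degreeOf_X_pow_sub_one _ _ hm] at hd0 hd1
  simp only [↓reduceIte, zero_ne_one, one_ne_zero, add_zero, zero_add] at hd0 hd1
  have hr0 := degreeOf_recip_le 0 h
  have hr1 := degreeOf_recip_le 1 h
  obtain ⟨u, v, w, huvw⟩ : ∃ u v w, recip h = u * g + v * (X 0 ^ l - 1) + w * (X 1 ^ m - 1) := by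
    obtain ⟨c, hc⟩ := hdvd
    obtain ⟨u, rfl⟩ := Ideal.Quotient.mk_surjective c
    rw [← map_mul, Ideal.Quotient.eq, hK, Ideal.mem_span_pair] at hc
    obtain ⟨v, w, hvw⟩ := hc
    exact ⟨u, v, w, by linear_combination -hvw⟩
  obtain ⟨p, q, ⟨p', hp'⟩, ⟨q', hq'⟩, rfl⟩ := exists_dvd_and_dvd_of_dvd_mul (Dvd.intro h heq.symm)
  have hp1 : degreeOf 1 p = 0 := degreeOf_eq_zero_of_dvd hA ⟨p', hp'⟩
    (by rw [degreeOf_X_pow_sub_one _ _ hl]; simp)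
  have hq0 : degreeOf 0 q = 0 := degreeOf_eq_zero_of_dvd hB ⟨q', hq'⟩
    (by rw [degreeOf_X_pow_sub_one _ _ hm]; simp)
  refine (isRelPrime_of_degreeOf (left_ne_zero_of_mul hg) (right_ne_zero_of_mul hg)
    hp1 hq0).mul_dvd ?_ ?_
  · refine dvd_of_degreeOf_lt 1 (s := u * q + v * p') (t := w) (m := m) hp1 (by omega) ?_
    rw [huvw, hp']; ring
  · refine dvd_of_degreeOf_lt 0 (s := u * p + w * q') (t := v) (m := l) hq0 (by omega) ?_
    rw [huvw, hq']; ring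
end
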